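/- Semiconcavity with linear modulus of the value function: for every open set W whose closure is compact and contained in Ω, there exists a constant C > 0 such that for all x, z ∈ X with x, x + z, x − z ∈ W, one has v(x + z) + v(x − z) − 2 v(x) ≤ C ‖z‖_M². -/

import Mathlib

open MeasureTheory Real Set Filter Topology
open scoped RealInnerProductSpace ENNReal

noncomputable section
namespace NBodyHJ

attribute [local instance] Classical.propDecidable

abbrev Conf (d N : ℕ) := Fin N → EuclideanSpace ℝ (Fin d)

variable {d N : ℕ}

/-- The mass inner product on the configuration space. -/
def minner (m : Fin N → ℝ) (x y : Conf d N) : ℝ := ∑ i, m i * ⟪x i, y i⟫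

/-- The mass norm on the configuration space. -/
def mnorm (m : Fin N → ℝ) (x : Conf d N) : ℝ := Real.sqrt (minner m x x)

/-- Membership in the zero-barycenter configuration space `X`. -/
def inX (m : Fin N → ℝ) (x : Conf d N) : Prop := ∑ i, m i • x i = 0

/-- Collision configurations. -/
def collision (x : Conf d N) : Prop := ∃ i j, i ≠ j ∧ x i = x j

/-- Membership in the collision-free zero-barycenter space `Ω`. -/
def inOmega (m : Fin N → ℝ) (x : Conf d N) : Prop := inX m x ∧ ¬ collision x

/-- The Newtonian potential (with junk value `0` for a colliding pair). -/
def U (m : Fin N → ℝ) (x : Conf d N) : ℝ :=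
  ∑ i : Fin N, ∑ j : Fin N, if i < j then m i * m j / ‖x i - x j‖ else 0

/-- The time interval `(t₀, T)`, where `T ∈ (t₀, +∞]` is extended-real. -/
def timeSet (t0 : ℝ) (T : EReal) : Set ℝ := {t : ℝ | t0 < t ∧ (t : EReal) < T}

/-- Membership of the pair (curve, derivative) `(φ, φ')` in `D₀^{1,2}(t₀, T)`:
`φ` starts at `0`, takes values in `X`, is the integral of `φ'` (hence locally
absolutely continuous), and `φ'` has finite `L²` mass norm on `(t₀, T)`. -/
def InD (m : Fin N → ℝ) (t0 : ℝ) (T : EReal) (φ φ' : ℝ → Conf d N) : Prop :=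
  φ t0 = 0 ∧
  (∀ t : ℝ, t0 ≤ t → (t : EReal) < T → inX m (φ t)) ∧
  (∀ t : ℝ, t0 ≤ t → (t : EReal) < T → φ t = ∫ s in Set.Ioc t0 t, φ' s) ∧
  (∀ t : ℝ, t0 ≤ t → (t : EReal) < T → IntegrableOn φ' (Set.Ioc t0 t)) ∧
  IntegrableOn (fun t => (mnorm m (φ' t)) ^ 2) (timeSet t0 T)

/-- The norm `‖φ‖_{D_T}`. -/
def Dnorm (m : Fin N → ℝ) (t0 : ℝ) (T : EReal) (φ' : ℝ → Conf d N) : ℝ :=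
  Real.sqrt (∫ t in timeSet t0 T, (mnorm m (φ' t)) ^ 2)

/-- The motion `γ(t) = φ(t) + t a + x - a` associated with `φ` in the hyperbolic case. -/
def hypCurve (a x : Conf d N) (φ : ℝ → Conf d N) (t : ℝ) : Conf d N :=
  φ t + t • a + x - a

/-- The integrand of the hyperbolic renormalized Lagrangian action. -/
def hypIntegrand (m : Fin N → ℝ) (a x : Conf d N) (φ φ' : ℝ → Conf d N) (t : ℝ) : ℝ :=
  (mnorm m (φ' t)) ^ 2 / 2 + U m (hypCurve a x φ t) - U m (t • a)

/-- The hyperbolic renormalized Lagrangian action `A_{x,[1,T]}(φ)`, with values in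
`ℝ ∪ {+∞}` : it equals the integral of the renormalized Lagrangian if this integrand is
integrable and the motion is a.e. collision-free, and `+∞` otherwise. -/
def hypAction (m : Fin N → ℝ) (a x : Conf d N) (T : EReal) (φ φ' : ℝ → Conf d N) : EReal :=
  if IntegrableOn (hypIntegrand m a x φ φ') (timeSet 1 T) ∧
      (∀ᵐ t ∂volume.restrict (timeSet 1 T), ¬ collision (hypCurve a x φ t))
  then ((∫ t in timeSet 1 T, hypIntegrand m a x φ φ' t : ℝ) : EReal)
  else (⊤ : EReal)

/-- The infimum of the hyperbolic renormalized action over `D₀^{1,2}(1,T)`. -/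
def hypInf (m : Fin N → ℝ) (a x : Conf d N) (T : EReal) : EReal :=
  ⨅ (φ : ℝ → Conf d N) (φ' : ℝ → Conf d N) (_ : InD m 1 T φ φ'), hypAction m a x T φ φ'

/-- The renormalized value function `v(x)` in the hyperbolic case. -/
def hypValue (m : Fin N → ℝ) (a x : Conf d N) : ℝ :=
  (hypInf m a x ⊤).toReal - minner m a x

section MassNorm

lemma mnorm_sq {m : Fin N → ℝ} (hm : ∀ i, 0 < m i) (x : Conf d N) :
    mnorm m x ^ 2 = ∑ i, m i * ‖x i‖ ^ 2 := by
  have h : minner m x x = ∑ i, m i * ‖x i‖ ^ 2 := by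
    simp [minner]
  rw [mnorm, Real.sq_sqrt, h]
  rw [h]
  exact Finset.sum_nonneg fun i _ => mul_nonneg (hm i).le (sq_nonneg _)

lemma exists_pos_mul_norm_sq_le_mnorm_sq {m : Fin N → ℝ} (hm : ∀ i, 0 < m i) (hN : 0 < N) :
    ∃ μ > 0, ∀ x : Conf d N, μ * ‖x‖ ^ 2 ≤ mnorm m x ^ 2 := by
  have : Nonempty (Fin N) := ⟨⟨0, hN⟩⟩
  obtain ⟨k, hk⟩ := Finite.exists_min m
  refine ⟨m k, hm k, fun x => ?_⟩
  obtain ⟨i, hi⟩ := Finite.exists_max fun i => ‖x i‖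
  have hx : ‖x‖ ≤ ‖x i‖ := (pi_norm_le_iff_of_nonneg (norm_nonneg _)).2 hi
  rw [mnorm_sq hm]
  calc m k * ‖x‖ ^ 2 ≤ m i * ‖x i‖ ^ 2 := by
        gcongr
        · exact (hm i).le
        · exact hk i
    _ ≤ _ := Finset.single_le_sum (f := fun i => m i * ‖x i‖ ^ 2)
        (fun i _ => mul_nonneg (hm i).le (sq_nonneg _)) (Finset.mem_univ i)

lemma mnorm_add_sq_add_mnorm_sub_sq {m : Fin N → ℝ} (hm : ∀ i, 0 < m i) (x y : Conf d N) :
    mnorm m (x + y) ^ 2 + mnorm m (x - y) ^ 2 = 2 * mnorm m x ^ 2 + 2 * mnorm m y ^ 2 := by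
  simp only [mnorm_sq hm, Finset.mul_sum, ← Finset.sum_add_distrib]
  refine Finset.sum_congr rfl fun i _ => ?_
  have := parallelogram_law_with_norm ℝ (x i) (y i)
  simp only [Pi.add_apply, Pi.sub_apply]
  linear_combination (m i) * this

lemma mnorm_smul_sq {m : Fin N → ℝ} (hm : ∀ i, 0 < m i) (c : ℝ) (x : Conf d N) :
    mnorm m (c • x) ^ 2 = c ^ 2 * mnorm m x ^ 2 := by
  simp only [mnorm_sq hm, Finset.mul_sum, Pi.smul_apply, norm_smul, mul_pow, Real.norm_eq_abs,
    sq_abs]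
  exact Finset.sum_congr rfl fun i _ => by ring

lemma continuous_mnorm (m : Fin N → ℝ) : Continuous (mnorm m : Conf d N → ℝ) := by
  unfold mnorm minner
  fun_prop

lemma minner_add_right (m : Fin N → ℝ) (a x y : Conf d N) :
    minner m a (x + y) = minner m a x + minner m a y := by
  simp [minner, inner_add_right, mul_add, Finset.sum_add_distrib]

lemma minner_sub_right (m : Fin N → ℝ) (a x y : Conf d N) :
    minner m a (x - y) = minner m a x - minner m a y := by
  simp [minner, inner_sub_right, mul_sub, Finset.sum_sub_distrib]

lemma inX.add {m : Fin N → ℝ} {x y : Conf d N} (hx : inX m x) (hy : inX m y) :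
    inX m (x + y) := by
  simp_all [inX, smul_add, Finset.sum_add_distrib]

lemma inX.smul {m : Fin N → ℝ} {x : Conf d N} (hx : inX m x) (c : ℝ) : inX m (c • x) := by
  unfold inX at *
  simp only [Pi.smul_apply, smul_comm _ c, ← Finset.smul_sum, hx, smul_zero]

lemma inX.sub {m : Fin N → ℝ} {x y : Conf d N} (hx : inX m x) (hy : inX m y) :
    inX m (x - y) := by
  simpa [sub_eq_add_neg] using hx.add (hy.smul (-1))

end MassNorm

section Potential

lemma norm_apply_sub_apply_le (x : Conf d N) (i j : Fin N) : ‖x i - x j‖ ≤ 2 * ‖x‖ := by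
  linarith [norm_sub_le (x i) (x j), norm_le_pi_norm x i, norm_le_pi_norm x j]

lemma not_collision_iff {x : Conf d N} : ¬ collision x ↔ ∀ i j, i ≠ j → 0 < ‖x i - x j‖ := by
  simp [collision, sub_eq_zero]

lemma exists_separation (hN : 0 < N) {K : Set (Conf d N)} (hK : IsCompact K)
    (hc : ∀ x ∈ K, ¬ collision x) :
    ∃ r > 0, ∀ x ∈ K, ∀ i j, i ≠ j → r ≤ ‖x i - x j‖ := by
  have h : ∀ p : Fin N × Fin N, ∃ r > 0, p.1 ≠ p.2 → ∀ x ∈ K, r ≤ ‖x p.1 - x p.2‖ := by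
    intro p
    by_cases hp : p.1 = p.2
    · exact ⟨1, one_pos, fun h => absurd hp h⟩
    · have hf : ContinuousOn (fun x : Conf d N => ‖x p.1 - x p.2‖) K := by fun_prop
      obtain ⟨r, hr, hrK⟩ := hK.exists_forall_le' hf (a := 0)
        fun x hx => not_collision_iff.1 (hc x hx) _ _ hp
      exact ⟨r, hr, fun _ => hrK⟩
  choose r hr hrK using h
  have : Nonempty (Fin N × Fin N) := ⟨(⟨0, hN⟩, ⟨0, hN⟩)⟩
  obtain ⟨p, hp⟩ := Finite.exists_min r
  exact ⟨r p, hr p, fun x hx i j hij => (hp (i, j)).trans (hrK (i, j) hij x hx)⟩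

lemma separation_of_norm_sub_le {x y : Conf d N} {r s : ℝ} (hx : ∀ i j, i ≠ j → r ≤ ‖x i - x j‖)
    (hxy : ‖y - x‖ ≤ s) (i j : Fin N) (hij : i ≠ j) : r - 2 * s ≤ ‖y i - y j‖ := by
  have h1 := norm_apply_sub_apply_le (y - x) i j
  have h2 := norm_sub_norm_le (x i - x j) (y i - y j)
  have h3 : x i - x j - (y i - y j) = -((y - x) i - (y - x) j) := by
    simp only [Pi.sub_apply]; abel
  rw [h3, norm_neg] at h2
  linarith [hx i j hij]

lemma continuousOn_U_comp (m : Fin N → ℝ) {γ : ℝ → Conf d N} {s : Set ℝ}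
    (hγ : ContinuousOn γ s) (hc : ∀ t ∈ s, ¬ collision (γ t)) :
    ContinuousOn (fun t => U m (γ t)) s := by
  unfold U
  refine continuousOn_finsetSum _ fun i _ => continuousOn_finsetSum _ fun j _ => ?_
  split_ifs with hij
  · refine continuousOn_const.div (by fun_prop) fun t ht => ?_
    exact (not_collision_iff.1 (hc t ht) i j hij.ne).ne'
  · exact continuousOn_const

/-- Second-difference bound for the Newtonian kernel. -/
lemma inv_norm_second_difference_le {E : Type*} [NormedAddCommGroup E] [InnerProductSpace ℝ E]
    {u w : E} {r : ℝ} (hr : 0 < r) (hu : r ≤ ‖u‖) (hw : ‖w‖ ≤ r / 2) :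
    1 / ‖u + w‖ + 1 / ‖u - w‖ - 2 / ‖u‖ ≤ 5 / r ^ 3 * ‖w‖ ^ 2 := by
  have key : ∀ p : ℝ, |p - ‖u‖| ≤ ‖w‖ →
      1 / p - 1 / ‖u‖ + (p ^ 2 - ‖u‖ ^ 2) / (2 * ‖u‖ ^ 3) ≤ 5 / 2 / r ^ 3 * ‖w‖ ^ 2 := by
    intro p hp
    have hR : 0 < ‖u‖ := hr.trans_le hu
    have hpr : r / 2 ≤ p := by linarith [(abs_le.1 hp).1]
    have hp0 : 0 < p := by linarith
    have e : 1 / p - 1 / ‖u‖ + (p ^ 2 - ‖u‖ ^ 2) / (2 * ‖u‖ ^ 3)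
        = (p - ‖u‖) ^ 2 * (1 / (2 * ‖u‖ ^ 3) + 1 / (‖u‖ ^ 2 * p)) := by
      field_simp
      ring
    have h1 : (p - ‖u‖) ^ 2 ≤ ‖w‖ ^ 2 := by
      rw [← sq_abs]
      gcongr
    have h2 : 1 / (2 * ‖u‖ ^ 3) ≤ 1 / (2 * r ^ 3) := by gcongr
    have h3 : 1 / (‖u‖ ^ 2 * p) ≤ 1 / (r ^ 2 * (r / 2)) := by gcongr
    have h4 : 1 / (2 * r ^ 3) + 1 / (r ^ 2 * (r / 2)) = 5 / 2 / r ^ 3 := by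
      field_simp
      norm_num
    rw [e, mul_comm (5 / 2 / r ^ 3)]
    have : 0 ≤ 1 / (2 * ‖u‖ ^ 3) + 1 / (‖u‖ ^ 2 * p) := by positivity
    gcongr
    linarith
  have h1 := key ‖u + w‖ (by simpa using abs_norm_sub_norm_le (u + w) u)
  have h2 := key ‖u - w‖ (by simpa using abs_norm_sub_norm_le (u - w) u)
  have h3 := parallelogram_law_with_norm ℝ u w
  have h4 : (‖u + w‖ ^ 2 - ‖u‖ ^ 2) / (2 * ‖u‖ ^ 3) + (‖u - w‖ ^ 2 - ‖u‖ ^ 2) / (2 * ‖u‖ ^ 3)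
      = ‖w‖ ^ 2 / ‖u‖ ^ 3 := by
    have hR : 0 < ‖u‖ := hr.trans_le hu
    field_simp
    linarith
  have h5 : 0 ≤ ‖w‖ ^ 2 / ‖u‖ ^ 3 := by positivity
  have h6 : 5 / r ^ 3 * ‖w‖ ^ 2 = 2 * (5 / 2 / r ^ 3 * ‖w‖ ^ 2) := by ring
  have h7 : 2 / ‖u‖ = 2 * (1 / ‖u‖) := by ring
  rw [h6, h7]
  linarith

/-- The total of the mass products over ordered pairs. -/
def massProd (m : Fin N → ℝ) : ℝ := ∑ i : Fin N, ∑ j : Fin N, m i * m j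

lemma massProd_nonneg {m : Fin N → ℝ} (hm : ∀ i, 0 < m i) : 0 ≤ massProd m :=
  Finset.sum_nonneg fun i _ => Finset.sum_nonneg fun j _ => (mul_pos (hm i) (hm j)).le

lemma U_second_difference_le {m : Fin N → ℝ} (hm : ∀ i, 0 < m i) {x w : Conf d N} {r : ℝ}
    (hr : 0 < r) (hx : ∀ i j, i ≠ j → r ≤ ‖x i - x j‖) (hw : ‖w‖ ≤ r / 4) :
    U m (x + w) + U m (x - w) - 2 * U m x ≤ massProd m * (20 / r ^ 3) * ‖w‖ ^ 2 := by
  simp only [U, massProd, Finset.mul_sum, Finset.sum_mul, ← Finset.sum_add_distrib,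
    ← Finset.sum_sub_distrib]
  refine Finset.sum_le_sum fun i _ => Finset.sum_le_sum fun j _ => ?_
  have hmm := mul_pos (hm i) (hm j)
  split_ifs with hij
  · have hw' := norm_apply_sub_apply_le w i j
    have h := inv_norm_second_difference_le hr (hx i j hij.ne) (w := w i - w j) (by linarith)
    have e1 : (x + w) i - (x + w) j = x i - x j + (w i - w j) := by
      simp only [Pi.add_apply]; abel
    have e2 : (x - w) i - (x - w) j = x i - x j - (w i - w j) := by
      simp only [Pi.sub_apply]; abel
    have h2 : ‖w i - w j‖ ^ 2 ≤ 4 * ‖w‖ ^ 2 := by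
      calc ‖w i - w j‖ ^ 2 ≤ (2 * ‖w‖) ^ 2 := by gcongr
        _ = _ := by ring
    rw [e1, e2]
    calc _ = m i * m j * (1 / ‖x i - x j + (w i - w j)‖ + 1 / ‖x i - x j - (w i - w j)‖
          - 2 / ‖x i - x j‖) := by ring
      _ ≤ m i * m j * (5 / r ^ 3 * (4 * ‖w‖ ^ 2)) := by
        gcongr
        exact h.trans (by gcongr)
      _ = _ := by ring
  · simp only [add_zero, mul_zero, sub_zero]
    positivity

lemma le_U_sub_U {m : Fin N → ℝ} (hm : ∀ i, 0 < m i) {x y : Conf d N} {r : ℝ}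
    (hr : 0 < r) (hx : ¬ collision x) (hy : ∀ i j, i ≠ j → r ≤ ‖y i - y j‖) :
    - (2 * massProd m * ‖x - y‖ / r ^ 2) ≤ U m x - U m y := by
  have e : -(2 * massProd m * ‖x - y‖ / r ^ 2) =
      massProd m * (-(2 * ‖x - y‖ / r ^ 2)) := by ring
  rw [e]
  simp only [U, massProd, Finset.sum_mul, ← Finset.sum_sub_distrib]
  refine Finset.sum_le_sum fun i _ => Finset.sum_le_sum fun j _ => ?_
  have hmm := mul_pos (hm i) (hm j)
  split_ifs with hij
  · have hp := not_collision_iff.1 hx i j hij.ne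
    have hq := hy i j hij.ne
    have hq0 := hr.trans_le hq
    have hpq : ‖x i - x j‖ - ‖y i - y j‖ ≤ 2 * ‖x - y‖ := by
      have h1 := norm_sub_norm_le (x i - x j) (y i - y j)
      have h2 := norm_apply_sub_apply_le (x - y) i j
      have h3 : (x - y) i - (x - y) j = x i - x j - (y i - y j) := by
        simp only [Pi.sub_apply]; abel
      rw [h3] at h2
      linarith
    generalize ‖x i - x j‖ = p at *
    generalize ‖y i - y j‖ = q at *
    have h1 : 1 / p - 1 / q + (p - q) / q ^ 2 = (p - q) ^ 2 / (p * q ^ 2) := by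
      field_simp
      ring
    have h2 : 0 ≤ (p - q) ^ 2 / (p * q ^ 2) := by positivity
    have h3 : (p - q) / q ^ 2 ≤ 2 * ‖x - y‖ / r ^ 2 := by
      calc (p - q) / q ^ 2 ≤ 2 * ‖x - y‖ / q ^ 2 := by gcongr
        _ ≤ _ := by gcongr
    calc _ ≤ m i * m j * (1 / p - 1 / q) := by
          gcongr
          linarith
      _ = _ := by ring
  · rw [sub_zero, mul_neg, neg_nonpos]
    positivity

end Potential

section Curves

variable {m : Fin N → ℝ} {φ φ' ψ ψ' : ℝ → Conf d N}

lemma timeSet_top (t0 : ℝ) : timeSet t0 ⊤ = Ioi t0 := by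
  ext t
  simp [timeSet, EReal.coe_lt_top]

lemma InD.inX (h : InD m 1 ⊤ φ φ') {t : ℝ} (ht : 1 ≤ t) : inX m (φ t) :=
  h.2.1 t ht (EReal.coe_lt_top t)

lemma InD.eq_integral (h : InD m 1 ⊤ φ φ') {t : ℝ} (ht : 1 ≤ t) :
    φ t = ∫ s in Ioc 1 t, φ' s :=
  h.2.2.1 t ht (EReal.coe_lt_top t)

lemma InD.integrableOn (h : InD m 1 ⊤ φ φ') {t : ℝ} (ht : 1 ≤ t) : IntegrableOn φ' (Ioc 1 t) :=
  h.2.2.2.1 t ht (EReal.coe_lt_top t)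

lemma InD.integrableOn_mnorm_sq (h : InD m 1 ⊤ φ φ') :
    IntegrableOn (fun t => mnorm m (φ' t) ^ 2) (Ioi 1) := by
  simpa only [timeSet_top] using h.2.2.2.2

lemma InD.aestronglyMeasurable (h : InD m 1 ⊤ φ φ') :
    AEStronglyMeasurable φ' (volume.restrict (Ioi 1)) := by
  have hU : (Ioi (1 : ℝ)) = ⋃ n : ℕ, Ioc 1 ((n : ℝ) + 1) := by
    ext t
    simp only [mem_Ioi, mem_iUnion, mem_Ioc, exists_and_left, iff_self_and]
    intro _
    obtain ⟨n, hn⟩ := exists_nat_ge t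
    exact ⟨n, by linarith⟩
  rw [hU, aestronglyMeasurable_iUnion_iff]
  exact fun n => (h.integrableOn (by simp)).aestronglyMeasurable

lemma InD.continuousOn (h : InD m 1 ⊤ φ φ') (T : ℝ) : ContinuousOn φ (Icc 1 T) := by
  rcases lt_or_ge T 1 with hT | hT
  · simp [Icc_eq_empty_of_lt hT]
  · have := intervalIntegral.continuousOn_primitive (μ := volume)
      ((integrableOn_Icc_iff_integrableOn_Ioc).2 (h.integrableOn hT))
    exact this.congr fun t ht => h.eq_integral ht.1

lemma InD.add (hm : ∀ i, 0 < m i) (h : InD m 1 ⊤ φ φ') (k : InD m 1 ⊤ ψ ψ') :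
    InD m 1 ⊤ (φ + ψ) (φ' + ψ') := by
  refine ⟨by simp [h.1, k.1], fun t ht _ => (h.inX ht).add (k.inX ht), fun t ht _ => ?_,
    fun t ht _ => (h.integrableOn ht).add (k.integrableOn ht), ?_⟩
  · simp only [Pi.add_apply]
    rw [integral_add (h.integrableOn ht) (k.integrableOn ht), h.eq_integral ht, k.eq_integral ht]
  · rw [timeSet_top]
    refine Integrable.mono' ((h.integrableOn_mnorm_sq.const_mul 2).add
      (k.integrableOn_mnorm_sq.const_mul 2)) ?_ (ae_of_all _ fun t => ?_)
    · exact (((continuous_mnorm m).comp_aestronglyMeasurable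
        (h.aestronglyMeasurable.add k.aestronglyMeasurable)).pow 2)
    · have := mnorm_add_sq_add_mnorm_sub_sq hm (φ' t) (ψ' t)
      have := sq_nonneg (mnorm m (φ' t - ψ' t))
      simp only [Pi.add_apply, norm_pow, Real.norm_eq_abs, sq_abs]
      linarith

/-- The curve of constant velocity `c` on `[1, 1 + δ]`, at rest afterwards. -/
def ramp (δ : ℝ) (c : Conf d N) (t : ℝ) : Conf d N := min (t - 1) δ • c

/-- The velocity of `ramp δ c`. -/
def rampVel (δ : ℝ) (c : Conf d N) : ℝ → Conf d N := (Ioc 1 (1 + δ)).indicator fun _ => c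

lemma inD_ramp {δ : ℝ} (hδ : 0 < δ) {c : Conf d N} (hc : inX m c) :
    InD m 1 ⊤ (ramp δ c) (rampVel δ c) := by
  have hint : ∀ s, IntegrableOn (rampVel δ c) s := fun s =>
    (IntegrableOn.integrable_indicator (by simp) measurableSet_Ioc).integrableOn
  refine ⟨by simp [ramp, hδ.le], fun t _ _ => hc.smul _, fun t ht _ => ?_,
    fun t _ _ => hint _, ?_⟩
  · rw [rampVel, setIntegral_indicator measurableSet_Ioc, Ioc_inter_Ioc, setIntegral_const, ramp]
    congr 1
    rw [Real.volume_real_Ioc_of_le (by simp [ht, hδ.le])]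
    simp only [max_self]
    rw [← min_sub_sub_right]
    simp
  · have e : (fun t => mnorm m (rampVel δ c t) ^ 2)
        = (Ioc 1 (1 + δ)).indicator fun _ => mnorm m c ^ 2 := by
      ext t
      by_cases ht : t ∈ Ioc 1 (1 + δ)
      · simp [rampVel, ht]
      · simp [rampVel, ht, mnorm, minner]
    rw [e]
    exact (IntegrableOn.integrable_indicator (by simp) measurableSet_Ioc).integrableOn

lemma InD.norm_le (h : InD m 1 ⊤ φ φ') {μ : ℝ} (hμ : 0 < μ)
    (hμm : ∀ x : Conf d N, μ * ‖x‖ ^ 2 ≤ mnorm m x ^ 2) {l t : ℝ} (hl : 0 < l) (ht : 1 ≤ t) :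
    ‖φ t‖ ≤ l / 2 * (t - 1) + (∫ s in Ioi 1, mnorm m (φ' s) ^ 2) / (2 * l * μ) := by
  have hI := h.integrableOn_mnorm_sq
  have hI' : IntegrableOn (fun s => mnorm m (φ' s) ^ 2 / (2 * l * μ)) (Ioi 1) := hI.div_const _
  rw [h.eq_integral ht]
  calc _ ≤ ∫ s in Ioc 1 t, ‖φ' s‖ := norm_integral_le_integral_norm _
    _ ≤ ∫ s in Ioc 1 t, (l / 2 + mnorm m (φ' s) ^ 2 / (2 * l * μ)) := by
      refine integral_mono (h.integrableOn ht).norm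
        ((integrable_const _).add (hI'.mono_set Ioc_subset_Ioi_self)) fun s => ?_
      have h1 : ‖φ' s‖ ^ 2 / (2 * l) ≤ mnorm m (φ' s) ^ 2 / (2 * l * μ) := by
        rw [div_le_div_iff₀ (by positivity) (by positivity)]
        nlinarith [hμm (φ' s)]
      have h2 : l / 2 + ‖φ' s‖ ^ 2 / (2 * l) - ‖φ' s‖ = (l - ‖φ' s‖) ^ 2 / (2 * l) := by
        field_simp
        ring
      have h3 : 0 ≤ (l - ‖φ' s‖) ^ 2 / (2 * l) := by positivity
      simp only
      linarith
    _ = l / 2 * (t - 1) + ∫ s in Ioc 1 t, mnorm m (φ' s) ^ 2 / (2 * l * μ) := by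
      rw [integral_add (integrable_const _) (hI'.mono_set Ioc_subset_Ioi_self),
        setIntegral_const, Real.volume_real_Ioc_of_le ht, smul_eq_mul, mul_comm]
    _ ≤ l / 2 * (t - 1) + ∫ s in Ioi 1, mnorm m (φ' s) ^ 2 / (2 * l * μ) := by
      gcongr
      · exact ae_of_all _ fun s => by positivity
      · exact Ioc_subset_Ioi_self
    _ = _ := by rw [integral_div]

end Curves

section Action

variable {m : Fin N → ℝ} {a x : Conf d N} {φ φ' : ℝ → Conf d N}

lemma hypInf_le (h : InD m 1 ⊤ φ φ') (hint : IntegrableOn (hypIntegrand m a x φ φ') (Ioi 1))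
    (hc : ∀ᵐ t ∂volume.restrict (Ioi 1), ¬ collision (hypCurve a x φ t)) :
    hypInf m a x ⊤ ≤ ((∫ t in Ioi 1, hypIntegrand m a x φ φ' t : ℝ) : EReal) := by
  have e : hypAction m a x ⊤ φ φ' = ((∫ t in Ioi 1, hypIntegrand m a x φ φ' t : ℝ) : EReal) := by
    rw [hypAction, timeSet_top, if_pos ⟨hint, hc⟩]
  rw [← e]
  exact iInf_le_of_le φ <| iInf_le_of_le φ' <| iInf_le _ h

lemma exists_of_hypInf_lt {c : EReal} (h : hypInf m a x ⊤ < c) :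
    ∃ φ φ' : ℝ → Conf d N, InD m 1 ⊤ φ φ' ∧ IntegrableOn (hypIntegrand m a x φ φ') (Ioi 1) ∧
      (∀ᵐ t ∂volume.restrict (Ioi 1), ¬ collision (hypCurve a x φ t)) ∧
      ((∫ t in Ioi 1, hypIntegrand m a x φ φ' t : ℝ) : EReal) < c := by
  simp only [hypInf, iInf_lt_iff] at h
  obtain ⟨φ, φ', hD, h⟩ := h
  rw [hypAction, timeSet_top] at h
  split_ifs at h with hc
  · exact ⟨φ, φ', hD, hc.1, hc.2, h⟩
  · exact absurd h (not_lt.2 le_top)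

/-- Coercivity of the renormalized action, uniformly for `x` in bounded sets. -/
lemma exists_coercive (hm : ∀ i, 0 < m i) (hN : 0 < N) (ha : ¬ collision a) (R : ℝ) :
    ∃ C : ℝ, ∀ (x : Conf d N) (φ φ' : ℝ → Conf d N), ‖x - a‖ ≤ R → InD m 1 ⊤ φ φ' →
      IntegrableOn (hypIntegrand m a x φ φ') (Ioi 1) →
      (∀ᵐ t ∂volume.restrict (Ioi 1), ¬ collision (hypCurve a x φ t)) →
      (∫ t in Ioi 1, mnorm m (φ' t) ^ 2) / 4 - C ≤ ∫ t in Ioi 1, hypIntegrand m a x φ φ' t := by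
  obtain ⟨μ, hμ, hμm⟩ := exists_pos_mul_norm_sq_le_mnorm_sq (d := d) hm hN
  obtain ⟨r, hr, hra⟩ : ∃ r > 0, ∀ i j, i ≠ j → r ≤ ‖a i - a j‖ := by
    simpa using exists_separation hN isCompact_singleton (K := {a}) (by simpa using ha)
  set B := 2 * massProd m / r ^ 2 + 1 with hB
  have hB0 : 0 < B := by
    have := massProd_nonneg hm
    positivity
  set κ := 4 * B / μ with hκ
  have hκ0 : 0 < κ := by positivity
  refine ⟨B * κ + 2 * B * R, fun x φ φ' hx hD hint hc => ?_⟩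
  set D := ∫ t in Ioi 1, mnorm m (φ' t) ^ 2 with hDdef
  have hD0 : 0 ≤ D := integral_nonneg fun t => sq_nonneg _
  have hR0 : 0 ≤ R := (norm_nonneg _).trans hx
  have hpow : IntegrableOn (fun t : ℝ => t ^ (-(3 / 2) : ℝ)) (Ioi 1) :=
    integrableOn_Ioi_rpow_of_lt (by norm_num) one_pos
  have hpow2 : ∫ t in Ioi (1 : ℝ), t ^ (-(3 / 2) : ℝ) = 2 := by
    rw [integral_Ioi_rpow_of_lt (by norm_num) one_pos]
    norm_num
  have key : ∫ t in Ioi 1, (mnorm m (φ' t) ^ 2 / 2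
      - B * (κ / 2 + D / (2 * κ * μ) + R) * t ^ (-(3 / 2) : ℝ))
      ≤ ∫ t in Ioi 1, hypIntegrand m a x φ φ' t := by
    refine integral_mono_ae ((hD.integrableOn_mnorm_sq.div_const 2).sub (hpow.const_mul _))
      hint ?_
    filter_upwards [hc, ae_restrict_mem measurableSet_Ioi] with t hct ht
    have ht1 : (1 : ℝ) < t := ht
    have ht0 : 0 < t := by linarith
    have hs : √t * √t = t := Real.mul_self_sqrt ht0.le
    have hs1 : 1 ≤ √t := Real.one_le_sqrt.2 ht1.le
    have hs0 : 0 < √t := by linarith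
    have hU := le_U_sub_U hm (y := t • a) (r := t * r) (by positivity) hct fun i j hij => by
      rw [Pi.smul_apply, Pi.smul_apply, ← smul_sub, norm_smul, Real.norm_of_nonneg ht0.le]
      gcongr
      exact hra i j hij
    have hφ := hD.norm_le hμ hμm (l := κ / √t) (by positivity) ht1.le
    have hn : ‖hypCurve a x φ t - t • a‖ ≤ (κ / 2 + D / (2 * κ * μ) + R) * √t := by
      have e : hypCurve a x φ t - t • a = φ t + (x - a) := by
        simp only [hypCurve]; abel
      have e1 : κ / √t / 2 * (t - 1) ≤ κ / 2 * √t := by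
        calc κ / √t / 2 * (t - 1) ≤ κ / √t / 2 * (√t * √t) := by
              gcongr
              linarith
          _ = _ := by field_simp
      have e2 : D / (2 * (κ / √t) * μ) = D / (2 * κ * μ) * √t := by field_simp
      have e3 : R ≤ R * √t := le_mul_of_one_le_right hR0 hs1
      rw [e]
      rw [e2] at hφ
      linarith [norm_add_le (φ t) (x - a)]
    have hpw : t ^ (-(3 / 2) : ℝ) = √t / t ^ 2 := by
      rw [Real.sqrt_eq_rpow, ← Real.rpow_natCast, ← Real.rpow_sub ht0]
      norm_num
    have hfin : 2 * massProd m * ‖hypCurve a x φ t - t • a‖ / (t * r) ^ 2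
        ≤ B * (κ / 2 + D / (2 * κ * μ) + R) * t ^ (-(3 / 2) : ℝ) := by
      rw [hpw]
      calc _ = 2 * massProd m / r ^ 2 * ‖hypCurve a x φ t - t • a‖ / t ^ 2 := by field_simp
        _ ≤ B * ((κ / 2 + D / (2 * κ * μ) + R) * √t) / t ^ 2 := by
          gcongr
          linarith
        _ = _ := by ring
    simp only [hypIntegrand]
    linarith
  rw [integral_sub (hD.integrableOn_mnorm_sq.div_const 2) (hpow.const_mul _), integral_div,
    integral_const_mul, hpow2] at key
  have e : B * (D / (2 * κ * μ)) * 2 = D / 4 := by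
    rw [hκ]
    field_simp
  linarith

end Action

section Perturbation

variable {m : Fin N → ℝ} {a x z : Conf d N} {φ φ' : ℝ → Conf d N} {δ r : ℝ}

/-- The profile decreasing linearly from `1` to `0` on `[1, 1 + δ]`. -/
def cutoff (δ t : ℝ) : ℝ := 1 - min (t - 1) δ / δ

lemma cutoff_mem (hδ : 0 < δ) {t : ℝ} (ht : 1 ≤ t) : cutoff δ t ∈ Icc (0 : ℝ) 1 := by
  have h1 : min (t - 1) δ / δ ≤ 1 := (div_le_one hδ).2 (min_le_right _ _)
  have h2 : 0 ≤ min (t - 1) δ / δ := div_nonneg (le_min (by linarith) hδ.le) hδ.le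
  exact ⟨by unfold cutoff; linarith, by unfold cutoff; linarith⟩

lemma cutoff_eq_zero (hδ : 0 < δ) {t : ℝ} (ht : 1 + δ ≤ t) : cutoff δ t = 0 := by
  rw [cutoff, min_eq_right (by linarith), div_self hδ.ne', sub_self]

lemma hypCurve_add_ramp (t : ℝ) :
    hypCurve a (x + z) (φ + ramp δ (-(1 / δ) • z)) t = hypCurve a x φ t + cutoff δ t • z := by
  simp only [hypCurve, Pi.add_apply, ramp, cutoff, smul_smul]
  module

lemma norm_cutoff_smul_le (hδ : 0 < δ) {t : ℝ} (ht : 1 ≤ t) : ‖cutoff δ t • z‖ ≤ ‖z‖ := by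
  have h := cutoff_mem hδ ht
  rw [norm_smul, Real.norm_of_nonneg h.1]
  exact mul_le_of_le_one_left (norm_nonneg _) h.2

lemma continuousOn_hypCurve (hD : InD m 1 ⊤ φ φ') (T : ℝ) :
    ContinuousOn (hypCurve a x φ) (Icc 1 T) := by
  have := hD.continuousOn T
  unfold hypCurve
  fun_prop

lemma not_collision_perturbed (hδ : 0 < δ) (hr : 0 < r)
    (hsep : ∀ t ∈ Icc 1 (1 + δ), ∀ i j, i ≠ j → r ≤ ‖hypCurve a x φ t i - hypCurve a x φ t j‖)
    (hzr : ‖z‖ ≤ r / 4) {t : ℝ} (ht : t ∈ Icc 1 (1 + δ)) :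
    ¬ collision (hypCurve a x φ t + cutoff δ t • z) := by
  refine not_collision_iff.2 fun i j hij => ?_
  have := separation_of_norm_sub_le (y := hypCurve a x φ t + cutoff δ t • z) (hsep t ht)
    (s := r / 4) (by simpa using (norm_cutoff_smul_le hδ ht.1).trans hzr) i j hij
  linarith

lemma ae_not_collision_perturbed (hδ : 0 < δ) (hr : 0 < r)
    (hc : ∀ᵐ t ∂volume.restrict (Ioi 1), ¬ collision (hypCurve a x φ t))
    (hsep : ∀ t ∈ Icc 1 (1 + δ), ∀ i j, i ≠ j → r ≤ ‖hypCurve a x φ t i - hypCurve a x φ t j‖)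
    (hzr : ‖z‖ ≤ r / 4) :
    ∀ᵐ t ∂volume.restrict (Ioi 1),
      ¬ collision (hypCurve a (x + z) (φ + ramp δ (-(1 / δ) • z)) t) := by
  filter_upwards [hc, ae_restrict_mem measurableSet_Ioi] with t hct ht
  rw [hypCurve_add_ramp]
  rcases le_total t (1 + δ) with h | h
  · exact not_collision_perturbed hδ hr hsep hzr ⟨(mem_Ioi.1 ht).le, h⟩
  · simpa [cutoff_eq_zero hδ h] using hct

lemma integrableOn_perturbed (hm : ∀ i, 0 < m i) (hδ : 0 < δ) (hr : 0 < r) (hD : InD m 1 ⊤ φ φ')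
    (hint : IntegrableOn (hypIntegrand m a x φ φ') (Ioi 1)) (hz : inX m z)
    (hsep : ∀ t ∈ Icc 1 (1 + δ), ∀ i j, i ≠ j → r ≤ ‖hypCurve a x φ t i - hypCurve a x φ t j‖)
    (hzr : ‖z‖ ≤ r / 4) :
    IntegrableOn (hypIntegrand m a (x + z) (φ + ramp δ (-(1 / δ) • z))
      (φ' + rampVel δ (-(1 / δ) • z))) (Ioi 1) := by
  have hD' := hD.add hm (inD_ramp hδ (hz.smul (-(1 / δ))))
  have hγ := continuousOn_hypCurve (a := a) (x := x) hD (1 + δ)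
  have hcut : Continuous (cutoff δ) := by
    unfold cutoff
    fun_prop
  have h1 : ContinuousOn (fun t => U m (hypCurve a x φ t + cutoff δ t • z) - U m (hypCurve a x φ t))
      (Icc 1 (1 + δ)) := by
    refine (continuousOn_U_comp m (by fun_prop) fun t ht =>
      not_collision_perturbed hδ hr hsep hzr ht).sub (continuousOn_U_comp m hγ fun t ht => ?_)
    exact not_collision_iff.2 fun i j hij => hr.trans_le (hsep t ht i j hij)
  have h2 := ((h1.integrableOn_Icc (μ := volume)).mono_set Ioc_subset_Icc_self).integrable_indicator
    measurableSet_Ioc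
  have h3 := ((hD'.integrableOn_mnorm_sq.div_const 2).add
    (hint.sub (hD.integrableOn_mnorm_sq.div_const 2))).add h2.integrableOn
  refine IntegrableOn.congr_fun h3 (fun t ht => ?_) measurableSet_Ioi
  simp only [Pi.add_apply, Pi.sub_apply, hypIntegrand, hypCurve_add_ramp]
  by_cases h : t ≤ 1 + δ
  · rw [indicator_of_mem (show t ∈ Ioc 1 (1 + δ) from ⟨ht, h⟩)]
    ring
  · rw [indicator_of_notMem (fun hh => h hh.2), cutoff_eq_zero hδ (not_le.1 h).le]
    simp only [zero_smul, add_zero]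
    ring

lemma rampVel_neg (c : Conf d N) : rampVel δ (-c) = -rampVel δ c := by
  ext1 t
  by_cases ht : t ∈ Ioc 1 (1 + δ) <;> simp [rampVel, ht]

/-- Comparison of the values at `x ± z` with the action of an admissible curve at `x`. -/
lemma exists_perturbed_actions (hm : ∀ i, 0 < m i) {μ : ℝ} (hμ : 0 < μ)
    (hμm : ∀ x : Conf d N, μ * ‖x‖ ^ 2 ≤ mnorm m x ^ 2)
    (hδ : 0 < δ) (hr : 0 < r) (hD : InD m 1 ⊤ φ φ')
    (hint : IntegrableOn (hypIntegrand m a x φ φ') (Ioi 1))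
    (hc : ∀ᵐ t ∂volume.restrict (Ioi 1), ¬ collision (hypCurve a x φ t)) (hz : inX m z)
    (hsep : ∀ t ∈ Icc 1 (1 + δ), ∀ i j, i ≠ j → r ≤ ‖hypCurve a x φ t i - hypCurve a x φ t j‖)
    (hzr : ‖z‖ ≤ r / 4) :
    ∃ A B : ℝ, hypInf m a (x + z) ⊤ ≤ A ∧ hypInf m a (x - z) ⊤ ≤ B ∧
      A + B ≤ 2 * (∫ t in Ioi 1, hypIntegrand m a x φ φ' t) +
        δ * (1 / δ ^ 2 + massProd m * (20 / r ^ 3) / μ) * mnorm m z ^ 2 := by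
  have hz' : inX m (-z) := by simpa using hz.smul (-1)
  have hzr' : ‖-z‖ ≤ r / 4 := by simpa using hzr
  have hI := integrableOn_perturbed hm hδ hr hD hint hz hsep hzr
  have hI' := integrableOn_perturbed hm hδ hr hD hint hz' hsep hzr'
  rw [sub_eq_add_neg x z]
  refine ⟨_, _, hypInf_le (hD.add hm (inD_ramp hδ (hz.smul (-(1 / δ))))) hI
    (ae_not_collision_perturbed hδ hr hc hsep hzr),
    hypInf_le (hD.add hm (inD_ramp hδ (hz'.smul (-(1 / δ))))) hI'
      (ae_not_collision_perturbed hδ hr hc hsep hzr'), ?_⟩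
  set G : ℝ := (1 / δ ^ 2 + massProd m * (20 / r ^ 3) / μ) * mnorm m z ^ 2 with hG
  have hGint : IntegrableOn ((Ioc 1 (1 + δ)).indicator fun _ => G) (Ioi 1) :=
    (IntegrableOn.integrable_indicator (by simp) measurableSet_Ioc).integrableOn
  have hGval : ∫ t in Ioi 1, (Ioc 1 (1 + δ)).indicator (fun _ => G) t = δ * G := by
    rw [setIntegral_indicator measurableSet_Ioc, inter_eq_right.2 Ioc_subset_Ioi_self,
      setIntegral_const, Real.volume_real_Ioc_of_le (by linarith)]
    simp
  rw [← integral_add hI hI', mul_assoc, ← hG, ← hGval, ← integral_const_mul,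
    ← integral_add (hint.const_mul 2) hGint]
  refine setIntegral_mono_on (hI.add hI') ((hint.const_mul 2).add hGint) measurableSet_Ioi
    fun t ht => ?_
  have hpar := mnorm_add_sq_add_mnorm_sub_sq hm (φ' t) (rampVel δ (-(1 / δ) • z) t)
  simp only [hypIntegrand, hypCurve_add_ramp]
  simp only [smul_neg, rampVel_neg, Pi.add_apply, Pi.neg_apply, ← sub_eq_add_neg]
  by_cases h : t ≤ 1 + δ
  · have htm : t ∈ Ioc 1 (1 + δ) := ⟨ht, h⟩
    have hU := U_second_difference_le hm (w := cutoff δ t • z) hr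
      (hsep t (Ioc_subset_Icc_self htm))
      ((norm_cutoff_smul_le hδ htm.1.le).trans hzr)
    have hU2 : massProd m * (20 / r ^ 3) * ‖cutoff δ t • z‖ ^ 2
        ≤ massProd m * (20 / r ^ 3) / μ * mnorm m z ^ 2 := by
      have := massProd_nonneg hm
      calc _ ≤ massProd m * (20 / r ^ 3) * (mnorm m z ^ 2 / μ) := by
            gcongr
            rw [le_div_iff₀ hμ, mul_comm]
            refine le_trans ?_ (hμm z)
            gcongr
            exact norm_cutoff_smul_le hδ htm.1.le
        _ = _ := by ring
    have hv : mnorm m (rampVel δ (-(1 / δ) • z) t) ^ 2 = 1 / δ ^ 2 * mnorm m z ^ 2 := by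
      rw [rampVel, indicator_of_mem htm, mnorm_smul_sq hm]
      ring
    rw [indicator_of_mem htm, hG]
    linarith
  · have htm : t ∉ Ioc 1 (1 + δ) := fun hh => h hh.2
    have hv : mnorm m (rampVel δ (-(1 / δ) • z) t) ^ 2 = 0 := by
      simp [rampVel, htm, mnorm, minner]
    rw [indicator_of_notMem htm, cutoff_eq_zero hδ (not_le.1 h).le]
    simp only [zero_smul, add_zero, sub_zero]
    linarith

end Perturbation

section FiniteAction

variable {m : Fin N → ℝ} {a x : Conf d N}

/-- A zero-barycenter configuration whose mutual directions avoid those of `x` and `a`. -/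
lemma exists_transversal (hd : 2 ≤ d) (hm : ∀ i, 0 < m i) (hN : 0 < N) (x a : Conf d N) :
    ∃ y : Conf d N, inX m y ∧ ∀ i j, i ≠ j →
      y i - y j ∉ Submodule.span ℝ {x i - x j} ∧ y i - y j ∉ Submodule.span ℝ {a i - a j} := by
  let P : {p : Fin N × Fin N // p.1 ≠ p.2} × Bool → Submodule ℝ (Conf d N) := fun q =>
    (Submodule.span ℝ {bif q.2 then x q.1.1.1 - x q.1.1.2 else a q.1.1.1 - a q.1.1.2}).comap
      (LinearMap.proj (R := ℝ) (φ := fun _ : Fin N => EuclideanSpace ℝ (Fin d)) q.1.1.1 -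
        LinearMap.proj q.1.1.2)
  have hP : ∀ q, P q ≠ ⊤ := by
    rintro ⟨⟨⟨i, j⟩, hij⟩, b⟩ htop
    set u := bif b then x i - x j else a i - a j with hu
    have hspan : Submodule.span ℝ {u} = ⊤ := by
      refine (Submodule.eq_top_iff').2 fun e => ?_
      have h : (Pi.single i e : Conf d N) ∈ P ⟨⟨(i, j), hij⟩, b⟩ := htop ▸ Submodule.mem_top
      have hij' : j ≠ i := fun h => hij h.symm
      simpa [P, hij', ← hu] using h
    have h1 := finrank_span_le_card (R := ℝ) ({u} : Set (EuclideanSpace ℝ (Fin d)))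
    simp only [toFinset_singleton, Finset.card_singleton] at h1
    rw [hspan, finrank_top, finrank_euclideanSpace_fin] at h1
    omega
  have hcov : ⋃ q, (P q : Set (Conf d N)) ≠ univ := fun h => by
    obtain ⟨q, hq⟩ := Subspace.exists_eq_top_of_iUnion_eq_univ h
    exact hP q hq
  obtain ⟨y, hy⟩ := (ne_univ_iff_exists_notMem _).1 hcov
  simp only [mem_iUnion, not_exists, SetLike.mem_coe] at hy
  have hM : (∑ i, m i) ≠ 0 :=
    (Finset.sum_pos (fun i _ => hm i) ⟨⟨0, hN⟩, Finset.mem_univ _⟩).ne'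
  refine ⟨fun i => y i - (∑ i, m i)⁻¹ • ∑ i, m i • y i, ?_, fun i j hij => ?_⟩
  · simp only [inX, smul_sub, Finset.sum_sub_distrib, ← Finset.sum_smul]
    rw [smul_smul, mul_inv_cancel₀ hM, one_smul, sub_self]
  · rw [sub_sub_sub_cancel_right]
    exact ⟨hy ⟨⟨(i, j), hij⟩, true⟩, hy ⟨⟨(i, j), hij⟩, false⟩⟩

lemma not_collision_hypCurve_ramp {y : Conf d N} (hx : ¬ collision x)
    (hy : ∀ i j, i ≠ j →
      y i - y j ∉ Submodule.span ℝ {x i - x j} ∧ y i - y j ∉ Submodule.span ℝ {a i - a j})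
    {t : ℝ} (ht : 1 ≤ t) : ¬ collision (hypCurve a x (ramp 1 (y - x - a)) t) := by
  rintro ⟨i, j, hij, h⟩
  have hxij := not_collision_iff.1 hx i j hij
  rw [← sub_eq_zero] at h
  simp only [hypCurve, ramp, Pi.add_apply, Pi.sub_apply, Pi.smul_apply] at h
  rcases le_total t 2 with h2 | h2
  · rw [min_eq_left (by linarith)] at h
    have h' : (t - 1) • (y i - y j) = (t - 2) • (x i - x j) := by
      rw [← sub_eq_zero, ← h]
      module
    rcases ht.eq_or_lt with rfl | h1
    · rw [sub_self, zero_smul, eq_comm, smul_eq_zero] at h'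
      rcases h' with h' | h'
      · norm_num at h'
      · simp [h'] at hxij
    · refine (hy i j hij).1 (Submodule.mem_span_singleton.2 ⟨(t - 1)⁻¹ * (t - 2), ?_⟩)
      rw [mul_smul, ← h', smul_smul, inv_mul_cancel₀ (by linarith), one_smul]
  · rw [min_eq_right (by linarith)] at h
    refine (hy i j hij).2 (Submodule.mem_span_singleton.2 ⟨2 - t, ?_⟩)
    rw [← sub_eq_zero, ← neg_eq_zero, ← h]
    module

lemma exists_finite_action (hd : 2 ≤ d) (hm : ∀ i, 0 < m i) (hN : 0 < N) (ha : inOmega m a)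
    (hx : inOmega m x) :
    ∃ φ φ' : ℝ → Conf d N, InD m 1 ⊤ φ φ' ∧ IntegrableOn (hypIntegrand m a x φ φ') (Ioi 1) ∧
      ∀ᵐ t ∂volume.restrict (Ioi 1), ¬ collision (hypCurve a x φ t) := by
  obtain ⟨y, hyX, hy⟩ := exists_transversal hd hm hN x a
  have hD : InD m 1 ⊤ (ramp 1 (y - x - a)) (rampVel 1 (y - x - a)) :=
    inD_ramp one_pos ((hyX.sub hx.1).sub ha.1)
  have hnc : ∀ t, 1 ≤ t → ¬ collision (hypCurve a x (ramp 1 (y - x - a)) t) := fun t ht =>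
    not_collision_hypCurve_ramp hx.2 hy ht
  refine ⟨_, _, hD, ?_, ?_⟩
  swap
  · filter_upwards [ae_restrict_mem measurableSet_Ioi] with t ht using hnc t (mem_Ioi.1 ht).le
  set γ := hypCurve a x (ramp 1 (y - x - a)) with hγ
  obtain ⟨r, hr, hra⟩ : ∃ r > 0, ∀ i j, i ≠ j → r ≤ ‖a i - a j‖ := by
    simpa using exists_separation hN isCompact_singleton (K := {a}) (by simpa using ha.2)
  have hγc : Continuous γ := by
    rw [hγ]
    unfold hypCurve ramp
    fun_prop
  have hta : ∀ t : ℝ, 0 < t → ∀ i j, i ≠ j → t * r ≤ ‖(t • a) i - (t • a) j‖ := by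
    intro t ht i j hij
    rw [Pi.smul_apply, Pi.smul_apply, ← smul_sub, norm_smul, Real.norm_of_nonneg ht.le]
    gcongr
    exact hra i j hij
  have hdiff : ContinuousOn (fun t => U m (γ t) - U m (t • a)) (Ici 1) := by
    refine (continuousOn_U_comp m hγc.continuousOn fun t ht => hnc t ht).sub
      (continuousOn_U_comp m (by fun_prop) fun t ht => not_collision_iff.2 fun i j hij => ?_)
    have ht0 : 0 < t := zero_lt_one.trans_le ht
    exact (mul_pos ht0 hr).trans_le (hta t ht0 i j hij)
  set c := ‖y - x - a‖ + ‖x - a‖ with hc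
  have hclose : ∀ t, 1 ≤ t → ‖γ t - t • a‖ ≤ c := by
    intro t ht
    have e : γ t - t • a = min (t - 1) 1 • (y - x - a) + (x - a) := by
      simp only [hγ, hypCurve, ramp]
      abel
    have h0 : 0 ≤ min (t - 1) 1 := le_min (by linarith) one_pos.le
    rw [e]
    refine (norm_add_le _ _).trans ?_
    rw [norm_smul, Real.norm_of_nonneg h0]
    have := mul_le_of_le_one_left (norm_nonneg (y - x - a)) (min_le_right (t - 1) 1)
    linarith
  set T := max 1 (4 * c / r) with hT
  have hT1 : 1 ≤ T := le_max_left _ _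
  have hU : IntegrableOn (fun t => U m (γ t) - U m (t • a)) (Ioi 1) := by
    rw [← Ioc_union_Ioi_eq_Ioi hT1]
    refine IntegrableOn.union (((hdiff.mono Icc_subset_Ici_self).integrableOn_Icc).mono_set
      Ioc_subset_Icc_self) ?_
    refine Integrable.mono' (g := fun t => 8 * massProd m * c / r ^ 2 * t ^ (-2 : ℝ))
      ((integrableOn_Ioi_rpow_of_lt (by norm_num) (by linarith)).const_mul _)
      ((hdiff.mono fun t ht => hT1.trans (mem_Ioi.1 ht).le).aestronglyMeasurable
        measurableSet_Ioi) ?_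
    filter_upwards [ae_restrict_mem measurableSet_Ioi] with t ht
    have htT : T < t := ht
    have ht0 : 0 < t := by linarith
    have h4 : c ≤ t * r / 4 := by
      have := (le_max_right 1 (4 * c / r)).trans htT.le
      rw [div_le_iff₀ hr] at this
      linarith
    have hcl := hclose t (by linarith)
    have hγs : ∀ i j, i ≠ j → t * r / 2 ≤ ‖γ t i - γ t j‖ := fun i j hij => by
      have := separation_of_norm_sub_le (hta t ht0) (hcl.trans h4) i j hij
      linarith
    have hta' : ∀ i j, i ≠ j → t * r / 2 ≤ ‖(t • a) i - (t • a) j‖ := fun i j hij => by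
      have := hta t ht0 i j hij
      have : 0 < t * r := by positivity
      linarith
    have hp : 0 < t * r / 2 := by positivity
    have l1 := le_U_sub_U hm hp (hnc t (by linarith)) hta'
    have l2 := le_U_sub_U hm hp
      (not_collision_iff.2 fun i j hij => hp.trans_le (hta' i j hij)) hγs
    rw [norm_sub_rev] at l2
    have hb : 2 * massProd m * ‖γ t - t • a‖ / (t * r / 2) ^ 2
        ≤ 8 * massProd m * c / r ^ 2 * t ^ (-2 : ℝ) := by
      have := massProd_nonneg hm
      rw [Real.rpow_neg ht0.le, Real.rpow_two]
      calc _ ≤ 2 * massProd m * c / (t * r / 2) ^ 2 := by gcongr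
        _ = _ := by
          field_simp
          ring
    rw [Real.norm_eq_abs, abs_le]
    constructor <;> linarith
  refine IntegrableOn.congr_fun ((hD.integrableOn_mnorm_sq.div_const 2).add hU) (fun t _ => ?_)
    measurableSet_Ioi
  simp only [Pi.add_apply, hypIntegrand]
  ring

end FiniteAction

section Bounds

variable {m : Fin N → ℝ} {a : Conf d N}

lemma exists_le_hypInf (hm : ∀ i, 0 < m i) (hN : 0 < N) (ha : ¬ collision a) (R : ℝ) :
    ∃ C : ℝ, ∀ x : Conf d N, ‖x - a‖ ≤ R → ((-C : ℝ) : EReal) ≤ hypInf m a x ⊤ := by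
  obtain ⟨C, hC⟩ := exists_coercive hm hN ha R
  refine ⟨C, fun x hx => le_of_not_gt fun h => ?_⟩
  obtain ⟨φ, φ', hD, hint, hc, hlt⟩ := exists_of_hypInf_lt h
  have h1 := hC x φ φ' hx hD hint hc
  have h2 : 0 ≤ ∫ t in Ioi 1, mnorm m (φ' t) ^ 2 := integral_nonneg fun t => sq_nonneg _
  have h3 := EReal.coe_lt_coe_iff.1 hlt
  linarith

lemma exists_local_hypInf_le (hd : 2 ≤ d) (hm : ∀ i, 0 < m i) (hN : 0 < N) (ha : inOmega m a)
    {x : Conf d N} (hx : inOmega m x) :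
    ∃ M : ℝ, ∃ ρ > 0, ∀ z, inX m z → ‖z‖ ≤ ρ → hypInf m a (x + z) ⊤ ≤ M := by
  obtain ⟨μ, hμ, hμm⟩ := exists_pos_mul_norm_sq_le_mnorm_sq (d := d) hm hN
  obtain ⟨φ, φ', hD, hint, hc⟩ := exists_finite_action hd hm hN ha hx
  obtain ⟨C, hC⟩ := exists_le_hypInf hm hN ha.2 (‖x - a‖ + 1)
  obtain ⟨r, hr, hrx⟩ : ∃ r > 0, ∀ i j, i ≠ j → r ≤ ‖x i - x j‖ := by
    simpa using exists_separation hN isCompact_singleton (K := {x}) (by simpa using hx.2)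
  have h1 : hypCurve a x φ 1 = x := by simp [hypCurve, hD.1]
  obtain ⟨δ, hδ, hδr⟩ : ∃ δ > 0, ∀ t ∈ Icc 1 (1 + δ), ‖hypCurve a x φ t - x‖ ≤ r / 4 := by
    have hcont := continuousOn_hypCurve (a := a) (x := x) hD 2 1 (by simp)
    obtain ⟨ε, hε, h⟩ := Metric.continuousWithinAt_iff.1 hcont (r / 4) (by positivity)
    refine ⟨min 1 (ε / 2), by positivity, fun t ht => ?_⟩
    have e1 := min_le_left 1 (ε / 2)
    have e2 := min_le_right 1 (ε / 2)
    have := h (x := t) ⟨ht.1, by linarith [ht.2]⟩ (by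
      rw [Real.dist_eq, abs_of_nonneg (by linarith [ht.1])]
      linarith [ht.2])
    rw [h1, dist_eq_norm] at this
    exact this.le
  have hsep : ∀ t ∈ Icc 1 (1 + δ), ∀ i j, i ≠ j →
      r / 2 ≤ ‖hypCurve a x φ t i - hypCurve a x φ t j‖ := fun t ht i j hij => by
    have := separation_of_norm_sub_le hrx (hδr t ht) i j hij
    linarith
  have hcm := ((isCompact_closedBall (0 : Conf d N) 1).bddAbove_image
    ((continuous_mnorm m).pow 2).continuousOn)
  obtain ⟨S, hS⟩ := hcm
  refine ⟨2 * (∫ t in Ioi 1, hypIntegrand m a x φ φ' t) +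
    δ * (1 / δ ^ 2 + massProd m * (20 / (r / 2) ^ 3) / μ) * S + C, min 1 (r / 8),
    by positivity, fun z hz hzρ => ?_⟩
  have hz1 : ‖z‖ ≤ 1 := hzρ.trans (min_le_left _ _)
  have hz2 : ‖z‖ ≤ r / 2 / 4 := (hzρ.trans (min_le_right _ _)).trans (by linarith)
  obtain ⟨A, B, hA, hB, hAB⟩ := exists_perturbed_actions hm hμ hμm hδ (half_pos hr) hD hint hc hz
    hsep hz2
  have hB' : -C ≤ B := by
    refine EReal.coe_le_coe_iff.1 ((hC (x - z) ?_).trans hB)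
    have : x - z - a = (x - a) - z := by abel
    rw [this]
    linarith [norm_sub_le (x - a) z]
  have hzS : mnorm m z ^ 2 ≤ S := hS ⟨z, by simpa using hz1, rfl⟩
  refine hA.trans (EReal.coe_le_coe_iff.2 ?_)
  have := massProd_nonneg hm
  have : δ * (1 / δ ^ 2 + massProd m * (20 / (r / 2) ^ 3) / μ) * mnorm m z ^ 2
    ≤ δ * (1 / δ ^ 2 + massProd m * (20 / (r / 2) ^ 3) / μ) * S := by gcongr
  linarith

lemma exists_hypInf_le_on_compact (hd : 2 ≤ d) (hm : ∀ i, 0 < m i) (hN : 0 < N)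
    (ha : inOmega m a) {K : Set (Conf d N)} (hK : IsCompact K) (hKΩ : ∀ x ∈ K, inOmega m x) :
    ∃ M : ℝ, ∀ x ∈ K, hypInf m a x ⊤ ≤ M := by
  refine hK.induction_on (p := fun s => ∃ M : ℝ, ∀ x ∈ s, hypInf m a x ⊤ ≤ M)
    ⟨0, by simp⟩ (fun s t hst ⟨M, hM⟩ => ⟨M, fun x hx => hM x (hst hx)⟩) ?_ ?_
  · rintro s t ⟨M, hM⟩ ⟨M', hM'⟩
    refine ⟨max M M', fun x hx => ?_⟩
    rcases hx with hx | hx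
    · exact (hM x hx).trans (EReal.coe_le_coe_iff.2 (le_max_left _ _))
    · exact (hM' x hx).trans (EReal.coe_le_coe_iff.2 (le_max_right _ _))
  · intro x hx
    obtain ⟨M, ρ, hρ, h⟩ := exists_local_hypInf_le hd hm hN ha (hKΩ x hx)
    refine ⟨K ∩ Metric.closedBall x ρ, inter_mem self_mem_nhdsWithin
      (mem_nhdsWithin_of_mem_nhds (Metric.closedBall_mem_nhds x hρ)), M, fun y hy => ?_⟩
    have := h (y - x) ((hKΩ y hy.1).1.sub (hKΩ x hx).1) (by simpa [dist_eq_norm] using hy.2)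
    simpa using this

end Bounds

/-- **Semiconcavity with linear modulus of the value function** : for every relatively open
set `W ⊆ X` (i.e. `W = V ∩ X` with `V` open in the ambient space) whose closure is compact
and contained in `Ω`, there is `C > 0` such that for all `x, z` with
`x, x + z, x − z ∈ W`, `v(x+z) + v(x−z) − 2v(x) ≤ C ‖z‖_M²`. -/
theorem value_function_semiconcave {d N : ℕ} (hd : 2 ≤ d) (hN : 2 ≤ N)
    (m : Fin N → ℝ) (hm : ∀ i, 0 < m i)
    (a : Conf d N) (ha : inOmega m a)
    (W V : Set (Conf d N)) (hV : IsOpen V) (hWV : W = V ∩ {x | inX m x})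
    (hWcpt : IsCompact (closure W)) (hWΩ : closure W ⊆ {x | inOmega m x}) :
    ∃ C > (0:ℝ), ∀ x z : Conf d N, x ∈ W → x + z ∈ W → x - z ∈ W →
      hypValue m a (x + z) + hypValue m a (x - z) - 2 * hypValue m a x ≤
        C * (mnorm m z) ^ 2 := by
  have hN0 : 0 < N := by omega
  obtain ⟨μ, hμ, hμm⟩ := exists_pos_mul_norm_sq_le_mnorm_sq (d := d) hm hN0
  obtain ⟨r, hr, hrK⟩ := exists_separation hN0 hWcpt fun x hx => (hWΩ hx).2
  obtain ⟨M, hM⟩ := exists_hypInf_le_on_compact hd hm hN0 ha hWcpt fun x hx => hWΩ hx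
  obtain ⟨R, hR⟩ : ∃ R, ∀ x ∈ closure W, ‖x - a‖ ≤ R := by
    obtain ⟨R, hR⟩ := hWcpt.isBounded.subset_closedBall a
    exact ⟨R, fun x hx => by simpa [dist_eq_norm] using hR hx⟩
  obtain ⟨C₀, hC₀⟩ := exists_coercive hm hN0 ha.2 R
  obtain ⟨C₁, hC₁⟩ := exists_le_hypInf hm hN0 ha.2 R
  -- the values are finite, with uniform bounds
  have hfin : ∀ x ∈ W, ∃ q : ℝ, hypInf m a x ⊤ = q ∧ -C₁ ≤ q ∧ q ≤ M := by
    intro x hx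
    have h1 := hC₁ x (hR x (subset_closure hx))
    have h2 := hM x (subset_closure hx)
    have e : ((hypInf m a x ⊤).toReal : EReal) = hypInf m a x ⊤ :=
      EReal.coe_toReal (ne_top_of_le_ne_top (EReal.coe_ne_top _) h2)
        (ne_bot_of_le_ne_bot (EReal.coe_ne_bot _) h1)
    rw [← e] at h1 h2
    exact ⟨_, e.symm, EReal.coe_le_coe_iff.1 h1, EReal.coe_le_coe_iff.1 h2⟩
  -- a uniform time during which almost minimizing curves stay away from collisions
  set E : ℝ := max 0 (4 * (M + 1 + C₀)) + 1 with hE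
  have hE0 : 0 < E := by positivity
  set l : ℝ := 4 * E / (r * μ) with hl
  have hl0 : 0 < l := by positivity
  set τ : ℝ := r / 16 / (l / 2 + ‖a‖) with hτ
  have hτ0 : 0 < τ := by positivity
  set K₁ : ℝ := τ * (1 / τ ^ 2 + massProd m * (20 / (r / 2) ^ 3) / μ) with hK₁
  have hS := massProd_nonneg hm
  have hK₁0 : 0 < K₁ := by positivity
  set K₂ : ℝ := (|2 * M + 2 * C₁| + 1) / (μ * (r / 8) ^ 2) with hK₂
  have hK₂0 : 0 < K₂ := by positivity
  refine ⟨K₁ + K₂, by positivity, fun x z hx hxp hxm => ?_⟩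
  obtain ⟨q, hq, hq1, hq2⟩ := hfin x hx
  obtain ⟨qp, hqp, hqp1, hqp2⟩ := hfin _ hxp
  obtain ⟨qm, hqm, hqm1, hqm2⟩ := hfin _ hxm
  simp only [hypValue, hq, hqp, hqm, EReal.toReal_coe, minner_add_right, minner_sub_right]
  have hzn : 0 ≤ mnorm m z ^ 2 := sq_nonneg _
  suffices h : qp + qm - 2 * q ≤ (K₁ + K₂) * mnorm m z ^ 2 by linarith
  rcases le_or_gt ‖z‖ (r / 8) with hzr | hzr
  · have hz : inX m z := by
      rw [hWV] at hx hxp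
      simpa using hxp.2.sub hx.2
    have hmain : qp + qm - 2 * q ≤ K₁ * mnorm m z ^ 2 := by
      refine le_of_forall_pos_le_add fun ε hε => ?_
      have hε' : 0 < min 1 (ε / 2) := by positivity
      obtain ⟨φ, φ', hD, hint, hc, hlt⟩ := exists_of_hypInf_lt (m := m) (a := a) (x := x)
        (c := ((q + min 1 (ε / 2) : ℝ) : EReal)) (by
          rw [hq]
          exact EReal.coe_lt_coe_iff.2 (by linarith))
      have hlt' := EReal.coe_lt_coe_iff.1 hlt
      have hco := hC₀ x φ φ' (hR x (subset_closure hx)) hD hint hc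
      have hDE : ∫ t in Ioi 1, mnorm m (φ' t) ^ 2 ≤ E := by
        linarith [le_max_right 0 (4 * (M + 1 + C₀)), min_le_left 1 (ε / 2)]
      have hsep : ∀ t ∈ Icc 1 (1 + τ), ∀ i j, i ≠ j →
          r / 2 ≤ ‖hypCurve a x φ t i - hypCurve a x φ t j‖ := by
        intro t ht i j hij
        have hφ := hD.norm_le hμ hμm hl0 ht.1
        have h1 : (∫ t in Ioi 1, mnorm m (φ' t) ^ 2) / (2 * l * μ) ≤ r / 8 := by
          calc _ ≤ E / (2 * l * μ) := by gcongr
            _ = r / 8 := by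
              rw [hl]
              field_simp
              norm_num
        have h2 : (l / 2 + ‖a‖) * (t - 1) ≤ r / 16 := by
          calc _ ≤ (l / 2 + ‖a‖) * τ := by
                gcongr
                linarith [ht.2]
            _ = r / 16 := by
              rw [hτ]
              field_simp
        have h3 : ‖hypCurve a x φ t - x‖ ≤ r / 4 := by
          have e : hypCurve a x φ t - x = φ t + (t - 1) • a := by
            simp only [hypCurve]
            module
          rw [e]
          refine (norm_add_le _ _).trans ?_
          rw [norm_smul, Real.norm_of_nonneg (by linarith [ht.1])]
          linarith
        have := separation_of_norm_sub_le (hrK x (subset_closure hx)) h3 i j hij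
        linarith
      obtain ⟨A, B, hA, hB, hAB⟩ := exists_perturbed_actions hm hμ hμm hτ0 (half_pos hr) hD hint
        hc hz hsep (by linarith)
      rw [hqp] at hA
      rw [hqm] at hB
      have hA' := EReal.coe_le_coe_iff.1 hA
      have hB' := EReal.coe_le_coe_iff.1 hB
      linarith [min_le_right 1 (ε / 2)]
    have : 0 ≤ K₂ * mnorm m z ^ 2 := by positivity
    linarith
  · have h1 : μ * (r / 8) ^ 2 ≤ mnorm m z ^ 2 := by
      refine le_trans ?_ (hμm z)
      gcongr
    have h2 : |2 * M + 2 * C₁| + 1 ≤ K₂ * mnorm m z ^ 2 := by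
      calc _ = K₂ * (μ * (r / 8) ^ 2) := by
            rw [hK₂]
            field_simp
        _ ≤ _ := by gcongr
    have : 0 ≤ K₁ * mnorm m z ^ 2 := by positivity
    linarith [le_abs_self (2 * M + 2 * C₁)]

end NBodyHJ
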